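/- Let U be an open subset of ℝ³ that is star-shaped about one of its points. Every smooth vector field F : U → ℝ³ admits a local Helmholtz-type decomposition: there exist a smooth function φ : U → ℝ and a smooth vector field a : U → ℝ³ such that F = ∇φ + curl a on U. (Local existence of antiderivatives with respect to the Dirac operator, an instance of the integral formula of geometric calculus.) -/

import Mathlib

/-!
The vector identity `Δb = ∇(div b) - curl (curl b)` reduces the decomposition of `F` to solving
`Δb = F` componentwise on `U`: then `φ = div b` and `a = -curl b` work. So the content is that the
Laplacian is surjective on `C^∞(U)` when `U` is open and star-shaped (`lap3_surjective`).

For smooth compactly supported data the Newtonian potential solves the Poisson equation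
(`lap3_conv_newt`). In general, take the star centre to be the origin and exhaust `U` by compact sets
`K n`, also star-shaped about the origin (`exists_star_exhaustion`). A solution near `K n` of the
equation with data `g` is corrected to a solution near `K (n + 1)` by adding a solution whose data is
supported away from `K n`; Mittag-Leffler's trick is to make that correction smaller than `2 ^ (-n)` on
`K n` by subtracting a function harmonic on a large ball (`exists_small_solution`). The corrections
then converge, and locally uniform limits of harmonic functions are smooth and harmonic
(`harmonic_limit`).

The harmonic approximation is where star-shapedness enters. If `y` lies on no segment from the origin
to a point of `K`, then `s ↦ 1 / ‖s • x - y‖` extends holomorphically to a complex neighbourhood of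
`[0, 1]`, uniformly in `x ∈ K` and in `y` in a compact set. By the identity theorem for functions with
values in a Banach space (`uniform_identity_approx`), its value at `s = 1` is a uniform limit of
combinations of its values at small `s > 0` (`newt_approx`). Hence the Newtonian potential `u` of
data supported away from `K` is approximated on `K` by combinations of the functions `u (s • ·)`, and
for small `s` these are harmonic on a ball as large as desired.
-/

/-- Partial derivative of `f` at `x` in direction `v`. -/
noncomputable def pd {E F : Type*} [NormedAddCommGroup E] [NormedSpace ℝ E]
    [NormedAddCommGroup F] [NormedSpace ℝ F] (f : E → F) (v : E) (x : E) : F :=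
  fderiv ℝ f x v

/-- The `i`-th partial derivative of a function on `ℝ³`. -/
noncomputable def pd3 (f : EuclideanSpace ℝ (Fin 3) → ℝ) (i : Fin 3)
    (x : EuclideanSpace ℝ (Fin 3)) : ℝ :=
  pd f (EuclideanSpace.single i 1) x

/-- Divergence of a vector field on `ℝ³`: `div F = ∂₁F₁ + ∂₂F₂ + ∂₃F₃`. -/
noncomputable def div3 (F : EuclideanSpace ℝ (Fin 3) → EuclideanSpace ℝ (Fin 3))
    (x : EuclideanSpace ℝ (Fin 3)) : ℝ :=
  ∑ i : Fin 3, pd3 (fun y => F y i) i x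

/-- Curl of a vector field on `ℝ³`:
`curl F = (∂₂F₃ − ∂₃F₂, ∂₃F₁ − ∂₁F₃, ∂₁F₂ − ∂₂F₁)`. -/
noncomputable def curl3 (F : EuclideanSpace ℝ (Fin 3) → EuclideanSpace ℝ (Fin 3))
    (x : EuclideanSpace ℝ (Fin 3)) : Fin 3 → ℝ :=
  ![pd3 (fun y => F y 2) 1 x - pd3 (fun y => F y 1) 2 x,
    pd3 (fun y => F y 0) 2 x - pd3 (fun y => F y 2) 0 x,
    pd3 (fun y => F y 1) 0 x - pd3 (fun y => F y 0) 1 x]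

/-- Gradient of a scalar field on `ℝ³`: `∇φ = (∂₁φ, ∂₂φ, ∂₃φ)`. -/
noncomputable def grad3 (φ : EuclideanSpace ℝ (Fin 3) → ℝ)
    (x : EuclideanSpace ℝ (Fin 3)) : Fin 3 → ℝ :=
  fun i => pd3 φ i x

open MeasureTheory Filter Topology Set
open scoped ContDiff

/-! ### The Laplacian -/

/-- The Laplacian on `ℝ³`, as the sum of the iterated partial derivatives `pd3`. -/
noncomputable def lap3 (f : EuclideanSpace ℝ (Fin 3) → ℝ) (x : EuclideanSpace ℝ (Fin 3)) : ℝ :=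
  ∑ i : Fin 3, pd3 (pd3 f i) i x

local notation "E3" => EuclideanSpace ℝ (Fin 3)

lemma pd3_contDiff {f : E3 → ℝ} (hf : ContDiff ℝ ∞ f) (i : Fin 3) : ContDiff ℝ ∞ (pd3 f i) := by
  unfold pd3 pd
  exact (hf.fderiv_right (m := ∞) (by simp)).clm_apply contDiff_const

lemma pd3_contDiffOn {U : Set E3} (hU : IsOpen U) {f : E3 → ℝ} (hf : ContDiffOn ℝ ∞ f U)
    (i : Fin 3) : ContDiffOn ℝ ∞ (pd3 f i) U := by
  unfold pd3 pd
  exact (hf.fderiv_of_isOpen hU (m := ∞) (by simp)).clm_apply (contDiffOn_const (c := EuclideanSpace.single i (1 : ℝ)))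

lemma pd3_congr {f g : E3 → ℝ} {x : E3} (h : f =ᶠ[𝓝 x] g) (i : Fin 3) :
    pd3 f i =ᶠ[𝓝 x] pd3 g i := by
  filter_upwards [h.fderiv (𝕜 := ℝ)] with y hy
  simp [pd3, pd, hy]

lemma lap3_congr {f g : E3 → ℝ} {x : E3} (h : f =ᶠ[𝓝 x] g) : lap3 f =ᶠ[𝓝 x] lap3 g := by
  filter_upwards [pd3_congr (pd3_congr h 0) 0, pd3_congr (pd3_congr h 1) 1,
    pd3_congr (pd3_congr h 2) 2] with y h0 h1 h2
  simp [lap3, Fin.sum_univ_three, h0, h1, h2]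

lemma pd3_hasCompactSupport {f : E3 → ℝ} (hf : HasCompactSupport f) (i : Fin 3) :
    HasCompactSupport (pd3 f i) := by
  unfold pd3 pd
  exact hf.fderiv_apply ℝ _

lemma pd3_zero (i : Fin 3) : pd3 (fun _ => (0 : ℝ)) i = fun _ => 0 := by
  ext x
  simp [pd3, pd]

lemma lap3_zero (x : E3) : lap3 (fun _ => (0 : ℝ)) x = 0 := by
  simp [lap3, pd3_zero]

lemma pd3_add {f g : E3 → ℝ} {x : E3} (hf : DifferentiableAt ℝ f x) (hg : DifferentiableAt ℝ g x)
    (i : Fin 3) : pd3 (fun y => f y + g y) i x = pd3 f i x + pd3 g i x := by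
  simp [pd3, pd, fderiv_fun_add hf hg]

lemma pd3_sub {f g : E3 → ℝ} {x : E3} (hf : DifferentiableAt ℝ f x) (hg : DifferentiableAt ℝ g x)
    (i : Fin 3) : pd3 (fun y => f y - g y) i x = pd3 f i x - pd3 g i x := by
  simp [pd3, pd, fderiv_fun_sub hf hg]

lemma pd3_const_mul (c : ℝ) (f : E3 → ℝ) (i : Fin 3) :
    pd3 (fun y => c * f y) i = fun x => c * pd3 f i x := by
  ext x
  by_cases hc : c = 0
  · simp [pd3, pd, hc]
  · have : (fun y => c * f y) = c • f := rfl
    simp [pd3, pd, this, fderiv_const_smul_field]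

lemma lap3_const_mul (c : ℝ) (f : E3 → ℝ) (x : E3) :
    lap3 (fun y => c * f y) x = c * lap3 f x := by
  simp only [lap3, pd3_const_mul, Finset.mul_sum]

lemma lap3_contDiff {f : E3 → ℝ} (hf : ContDiff ℝ ∞ f) : ContDiff ℝ ∞ (lap3 f) := by
  unfold lap3
  exact ContDiff.sum fun i _ => pd3_contDiff (pd3_contDiff hf i) i

lemma lap3_hasCompactSupport {f : E3 → ℝ} (hf : HasCompactSupport f) :
    HasCompactSupport (lap3 f) := by
  refine hf.mono' fun x hx => ?_
  by_contra h
  have h0 := lap3_congr (notMem_tsupport_iff_eventuallyEq.1 h)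
  apply hx
  rw [h0.eq_of_nhds]
  exact lap3_zero x

lemma lap3_add_of_contDiffAt {f g : E3 → ℝ} {x : E3} (hf : ContDiffAt ℝ ∞ f x)
    (hg : ContDiffAt ℝ ∞ g x) : lap3 (fun y => f y + g y) x = lap3 f x + lap3 g x := by
  have key (i : Fin 3) : pd3 (pd3 (fun y => f y + g y) i) i x
      = pd3 (pd3 f i) i x + pd3 (pd3 g i) i x := by
    have h1 : pd3 (fun y => f y + g y) i =ᶠ[𝓝 x] fun y => pd3 f i y + pd3 g i y := by
      filter_upwards [(hf.of_le (m := 1) (by simp)).eventually (by simp),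
        (hg.of_le (m := 1) (by simp)).eventually (by simp)] with y h1 h2
      exact pd3_add (h1.differentiableAt (by simp)) (h2.differentiableAt (by simp)) i
    rw [(pd3_congr h1 i).eq_of_nhds]
    refine pd3_add ?_ ?_ i
    · unfold pd3 pd
      exact (((hf.fderiv_right (m := ∞) (by simp)).clm_apply contDiffAt_const).differentiableAt
        (by simp))
    · unfold pd3 pd
      exact (((hg.fderiv_right (m := ∞) (by simp)).clm_apply contDiffAt_const).differentiableAt
        (by simp))
  simp only [lap3, key, Finset.sum_add_distrib]

lemma lap3_sub {f g : E3 → ℝ} {x : E3} (hf : ContDiffAt ℝ ∞ f x)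
    (hg : ContDiffAt ℝ ∞ g x) : lap3 (fun y => f y - g y) x = lap3 f x - lap3 g x := by
  have h := lap3_add_of_contDiffAt hf (contDiffAt_const (c := (-1 : ℝ)) |>.mul hg)
  rw [lap3_const_mul] at h
  have e : (fun y => f y - g y) = fun y => f y + -1 * g y := by ext y; ring
  rw [e, h]; ring

lemma lap3_sum {ι : Type*} (s : Finset ι) {f : ι → E3 → ℝ} (hf : ∀ i, ContDiff ℝ ∞ (f i)) (x : E3) :
    lap3 (fun y => ∑ i ∈ s, f i y) x = ∑ i ∈ s, lap3 (f i) x := by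
  classical
  induction s using Finset.induction_on with
  | empty => simp [lap3_zero]
  | insert a s ha ih =>
    simp only [Finset.sum_insert ha]
    rw [lap3_add_of_contDiffAt (hf a).contDiffAt
      (ContDiff.sum fun i _ => hf i).contDiffAt, ih]

lemma pd3_comp_smul (s : ℝ) (f : E3 → ℝ) (i : Fin 3) :
    pd3 (fun y => f (s • y)) i = fun x => s * pd3 f i (s • x) := by
  ext x
  simp [pd3, pd, fderiv_comp_smul]

lemma lap3_comp_smul (s : ℝ) (f : E3 → ℝ) (x : E3) :
    lap3 (fun y => f (s • y)) x = s ^ 2 * lap3 f (s • x) := by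
  simp only [lap3, pd3_comp_smul, pd3_const_mul, Finset.mul_sum]
  refine Finset.sum_congr rfl fun i _ => by ring

lemma pd3_comp_sub (a : E3) (f : E3 → ℝ) (i : Fin 3) :
    pd3 (fun y => f (a - y)) i = fun x => -1 * pd3 f i (a - x) := by
  have h : (fun y => f (a - y)) = fun y => (fun z => f (z + a)) ((-1 : ℝ) • y) := by
    ext y; simp [sub_eq_neg_add]
  refine (congrArg (pd3 · i) h).trans ((pd3_comp_smul (-1) (fun z => f (z + a)) i).trans ?_)
  ext x
  simp [pd3, pd, sub_eq_neg_add, fderiv_comp_add_right a]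

lemma lap3_comp_sub (a : E3) (f : E3 → ℝ) (x : E3) :
    lap3 (fun y => f (a - y)) x = lap3 f (a - x) := by
  simp only [lap3, pd3_comp_sub, pd3_const_mul]
  simp

lemma lap3_comp_add (a : E3) (f : E3 → ℝ) (x : E3) :
    lap3 (fun y => f (y + a)) x = lap3 f (x + a) := by
  have (i : Fin 3) (f : E3 → ℝ) : pd3 (fun y => f (y + a)) i = fun x => pd3 f i (x + a) := by
    ext x
    simp [pd3, pd, fderiv_comp_add_right]
  simp only [lap3, this]

/-- Green's second identity, without boundary terms. -/
lemma integral_mul_lap3 {k ψ : E3 → ℝ} (hk : ContDiff ℝ ∞ k) (hψ : ContDiff ℝ ∞ ψ)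
    (hc : HasCompactSupport ψ) : ∫ y, k y * lap3 ψ y = ∫ y, lap3 k y * ψ y := by
  have ibp {f g : E3 → ℝ} (i : Fin 3) (hf : ContDiff ℝ ∞ f) (hg : ContDiff ℝ ∞ g)
      (h : HasCompactSupport g) :
      ∫ y, f y * pd3 g i y = - ∫ y, pd3 f i y * g y := by
    refine integral_mul_fderiv_eq_neg_fderiv_mul_of_integrable ?_ ?_ ?_
      (fun x _ => (hf.differentiable (by simp)) x) (fun x _ => (hg.differentiable (by simp)) x)
    · exact ((pd3_contDiff hf i).continuous.mul hg.continuous).integrable_of_hasCompactSupport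
        (h.mul_left)
    · exact (hf.continuous.mul (pd3_contDiff hg i).continuous).integrable_of_hasCompactSupport
        ((pd3_hasCompactSupport h i).mul_left)
    · exact (hf.continuous.mul hg.continuous).integrable_of_hasCompactSupport (h.mul_left)
  simp only [lap3, Finset.mul_sum, Finset.sum_mul]
  rw [integral_finsetSum, integral_finsetSum]
  · refine Finset.sum_congr rfl fun i _ => ?_
    rw [ibp i hk (pd3_contDiff hψ i) (pd3_hasCompactSupport hc i),
      ibp i (pd3_contDiff hk i) hψ hc, neg_neg]
  · intro i _
    exact ((pd3_contDiff (pd3_contDiff hk i) i).continuous.mul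
      hψ.continuous).integrable_of_hasCompactSupport (hc.mul_left)
  · intro i _
    exact (hk.continuous.mul
      (pd3_contDiff (pd3_contDiff hψ i) i).continuous).integrable_of_hasCompactSupport
      ((pd3_hasCompactSupport (pd3_hasCompactSupport hc i) i).mul_left)

/-! ### The Newtonian kernel and its potentials -/

/-- The regularised Newtonian kernel `(‖y‖² + a)^(-1/2)`; for `a = 0` it is the Newtonian kernel
`1 / ‖y‖`, with the junk value `0` at the origin. -/
noncomputable def newt (a : ℝ) (y : E3) : ℝ := (‖y‖ ^ 2 + a) ^ (-1 / 2 : ℝ)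

lemma contDiffAt_sq_rpow {a p : ℝ} {y : E3} (h : 0 < ‖y‖ ^ 2 + a) :
    ContDiffAt ℝ ∞ (fun y : E3 => (‖y‖ ^ 2 + a) ^ p) y :=
  (((contDiff_norm_sq ℝ).contDiffAt).add contDiffAt_const).rpow_const_of_ne h.ne'

lemma pd3_sq_rpow {a p : ℝ} {y : E3} (h : 0 < ‖y‖ ^ 2 + a) (i : Fin 3) :
    pd3 (fun y : E3 => (‖y‖ ^ 2 + a) ^ p) i y = 2 * p * (y i * (‖y‖ ^ 2 + a) ^ (p - 1)) := by
  have h1 : HasFDerivAt (fun y : E3 => ‖y‖ ^ 2 + a) (2 • innerSL ℝ y) y :=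
    (hasStrictFDerivAt_norm_sq y).hasFDerivAt.add_const a
  have h2 := (h1.rpow_const (p := p) (Or.inl h.ne')).fderiv
  simp only [pd3, pd, h2]
  simp [EuclideanSpace.inner_single_right]
  ring

lemma pd3_coord_mul {f : E3 → ℝ} {y : E3} (hf : DifferentiableAt ℝ f y) (i : Fin 3) :
    pd3 (fun y : E3 => y i * f y) i y = f y + y i * pd3 f i y := by
  have h0 : HasFDerivAt (fun y : E3 => y i) (EuclideanSpace.proj (𝕜 := ℝ) i) y :=
    (EuclideanSpace.proj (𝕜 := ℝ) i).hasFDerivAt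
  have h1 := (h0.mul hf.hasFDerivAt).fderiv
  have h2 : (fun y : E3 => y i * f y) = (fun y : E3 => y i) * f := rfl
  simp only [pd3, pd, h2, h1]
  simp
  ring

/-- `Δ (‖y‖² + a)^(-1/2) = -3 a (‖y‖² + a)^(-5/2)`. -/
lemma lap3_newt {a : ℝ} {y : E3} (h : 0 < ‖y‖ ^ 2 + a) :
    lap3 (newt a) y = -3 * a * (‖y‖ ^ 2 + a) ^ (-5 / 2 : ℝ) := by
  have ho : ∀ᶠ z : E3 in 𝓝 y, 0 < ‖z‖ ^ 2 + a :=
    (isOpen_lt continuous_const (by fun_prop)).mem_nhds h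
  have key (i : Fin 3) : pd3 (pd3 (newt a) i) i y
      = -(‖y‖ ^ 2 + a) ^ (-3 / 2 : ℝ) + 3 * (y i) ^ 2 * (‖y‖ ^ 2 + a) ^ (-5 / 2 : ℝ) := by
    have h1 : pd3 (newt a) i =ᶠ[𝓝 y] fun z => -1 * (z i * (‖z‖ ^ 2 + a) ^ (-3 / 2 : ℝ)) := by
      filter_upwards [ho] with z hz
      unfold newt
      rw [pd3_sq_rpow hz]
      norm_num
    rw [(pd3_congr h1 i).eq_of_nhds, pd3_const_mul]
    beta_reduce
    rw [ pd3_coord_mul ((contDiffAt_sq_rpow h).differentiableAt (by simp)), pd3_sq_rpow h]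
    norm_num
    ring
  have h3 : (‖y‖ ^ 2 + a) ^ (-3 / 2 : ℝ) = (‖y‖ ^ 2 + a) * (‖y‖ ^ 2 + a) ^ (-5 / 2 : ℝ) := by
    rw [← Real.rpow_one_add' h.le (by norm_num)]; norm_num
  have h4 : ‖y‖ ^ 2 = y 0 ^ 2 + y 1 ^ 2 + y 2 ^ 2 := by
    rw [EuclideanSpace.norm_sq_eq]; simp [Fin.sum_univ_three]
  simp only [lap3, key, Fin.sum_univ_three, h3]
  generalize (‖y‖ ^ 2 + a) ^ (-5 / 2 : ℝ) = r
  rw [h4]; ring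

lemma newt_zero (y : E3) : newt 0 y = ‖y‖⁻¹ := by
  rw [newt, add_zero, ← Real.rpow_natCast, ← Real.rpow_mul (norm_nonneg y)]
  norm_num [Real.rpow_neg_one]

lemma newt_le {a : ℝ} (ha : 0 ≤ a) {y : E3} (hy : y ≠ 0) : newt a y ≤ newt 0 y := by
  have : 0 < ‖y‖ ^ 2 := by positivity
  exact Real.rpow_le_rpow_of_nonpos (by simpa using this) (by linarith) (by norm_num)

lemma newt_nonneg {a : ℝ} (ha : 0 ≤ a) (y : E3) : 0 ≤ newt a y := by
  unfold newt; positivity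

lemma newt_measurable (a : ℝ) : Measurable (newt a) := by
  unfold newt; fun_prop

lemma newt_locallyIntegrable : LocallyIntegrable (newt 0) := by
  refine locallyIntegrable_of_norm_le_rpow (C := 1) (α := 1) (by simp) (by simp) ?_
    (newt_measurable 0).aestronglyMeasurable
  filter_upwards with y
  simp [newt_zero, Real.rpow_neg_one]

lemma newt_contDiffAt {a : ℝ} {y : E3} (h : 0 < ‖y‖ ^ 2 + a) : ContDiffAt ℝ ∞ (newt a) y :=
  contDiffAt_sq_rpow h

lemma newt_contDiff {a : ℝ} (ha : 0 < a) : ContDiff ℝ ∞ (newt a) :=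
  contDiff_iff_contDiffAt.2 fun y => newt_contDiffAt (by positivity)

/-- The mass of `-Δ(1/‖·‖)` at the origin, that is `4π`; only its positivity matters here. -/
noncomputable def newtMass : ℝ := 3 * ∫ z : E3, (1 + ‖z‖ ^ 2) ^ (-5 / 2 : ℝ)

lemma integrable_bracket : Integrable fun z : E3 => (1 + ‖z‖ ^ 2) ^ (-5 / 2 : ℝ) :=
  integrable_rpow_neg_one_add_norm_sq (r := 5) (by simp; norm_num)

lemma newtMass_pos : 0 < newtMass := by
  refine mul_pos (by norm_num) ?_
  refine (integral_pos_iff_support_of_nonneg (fun z => by positivity) integrable_bracket).2 ?_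
  have : (Function.support fun z : E3 => (1 + ‖z‖ ^ 2) ^ (-5 / 2 : ℝ)) = univ := by
    ext z
    have : 0 < (1 + ‖z‖ ^ 2) ^ (-5 / 2 : ℝ) := by positivity
    simpa using this.ne'
  rw [this]
  simp

lemma integral_lap3_newt {ε : ℝ} (hε : 0 < ε) (ψ : E3 → ℝ) :
    ∫ y, lap3 (newt (ε ^ 2)) y * ψ y
      = -3 * ∫ z : E3, (1 + ‖z‖ ^ 2) ^ (-5 / 2 : ℝ) * ψ (ε • z) := by
  have h := Measure.integral_comp_smul volume (fun y : E3 => lap3 (newt (ε ^ 2)) y * ψ y) ε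
  have hd : Module.finrank ℝ E3 = 3 := by simp
  rw [hd, abs_of_pos (by positivity), smul_eq_mul, eq_comm, inv_mul_eq_iff_eq_mul₀ (by positivity),
    ← integral_const_mul] at h
  rw [h, ← integral_const_mul]
  congr 1
  ext z
  have e1 : ‖ε • z‖ ^ 2 + ε ^ 2 = ε ^ 2 * (1 + ‖z‖ ^ 2) := by
    rw [norm_smul, Real.norm_of_nonneg hε.le]; ring
  have e2 : (ε ^ 2) ^ (-5 / 2 : ℝ) = (ε ^ 5)⁻¹ := by
    rw [← Real.rpow_natCast, ← Real.rpow_mul hε.le, ← Real.rpow_natCast, ← Real.rpow_neg hε.le]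
    norm_num
  rw [lap3_newt (by positivity), e1, Real.mul_rpow (by positivity) (by positivity), e2]
  field_simp

/-- The Newtonian kernel is a multiple of a fundamental solution of the Laplacian. The identity
is the limit, as `ε → 0`, of Green's identity for the smooth kernels `newt (ε²)`, whose Laplacians
form an approximate identity. -/
lemma integral_newt_mul_lap3 {ψ : E3 → ℝ} (hψ : ContDiff ℝ ∞ ψ) (hc : HasCompactSupport ψ) :
    ∫ y, newt 0 y * lap3 ψ y = -newtMass * ψ 0 := by
  set ε : ℕ → ℝ := fun n => 1 / ((n : ℝ) + 1) with hε
  have hε0 : Tendsto ε atTop (𝓝 0) := tendsto_one_div_add_atTop_nhds_zero_nat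
  have hεp (n : ℕ) : 0 < ε n := by positivity
  have hL := (lap3_contDiff hψ).continuous
  have hne : ∀ᵐ y : E3, y ≠ 0 := by
    rw [ae_iff]; simp
  have lim1 : Tendsto (fun n => ∫ y, newt (ε n ^ 2) y * lap3 ψ y) atTop
      (𝓝 (∫ y, newt 0 y * lap3 ψ y)) := by
    refine tendsto_integral_of_dominated_convergence (fun y => ‖newt 0 y * lap3 ψ y‖) ?_ ?_ ?_ ?_
    · exact fun n => (newt_measurable _).aestronglyMeasurable.mul hL.aestronglyMeasurable
    · refine Integrable.norm ?_
      have := newt_locallyIntegrable.integrable_smul_right_of_hasCompactSupport hL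
        (lap3_hasCompactSupport hc)
      simpa using this
    · intro n
      filter_upwards [hne] with y hy
      rw [norm_mul, norm_mul, Real.norm_of_nonneg (newt_nonneg (sq_nonneg _) y),
        Real.norm_of_nonneg (newt_nonneg le_rfl y)]
      gcongr
      exact newt_le (sq_nonneg _) hy
    · filter_upwards [hne] with y hy
      refine Tendsto.mul_const _ ?_
      have hy' : 0 < ‖y‖ ^ 2 := by positivity
      unfold newt
      refine Tendsto.rpow_const ?_ (Or.inl (by simpa using hy))
      simpa using (hε0.pow 2).const_add (‖y‖ ^ 2)
  have lim2 : Tendsto (fun n => ∫ z : E3, (1 + ‖z‖ ^ 2) ^ (-5 / 2 : ℝ) * ψ (ε n • z)) atTop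
      (𝓝 (∫ z : E3, (1 + ‖z‖ ^ 2) ^ (-5 / 2 : ℝ) * ψ 0)) := by
    obtain ⟨M, hM⟩ := hc.exists_bound_of_continuous hψ.continuous
    refine tendsto_integral_of_dominated_convergence
      (fun z => (1 + ‖z‖ ^ 2) ^ (-5 / 2 : ℝ) * M) ?_ ?_ ?_ ?_
    · intro n
      refine Measurable.aestronglyMeasurable ?_
      have := hψ.continuous.measurable
      fun_prop
    · exact integrable_bracket.mul_const M
    · intro n
      filter_upwards with z
      rw [norm_mul, Real.norm_of_nonneg (by positivity)]
      gcongr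
      exact hM _
    · filter_upwards with z
      refine Tendsto.const_mul _ ?_
      have : Tendsto (fun n => ε n • z) atTop (𝓝 ((0 : ℝ) • z)) := hε0.smul_const z
      rw [zero_smul] at this
      exact (hψ.continuous.tendsto 0).comp this
  have heq (n : ℕ) : ∫ y, newt (ε n ^ 2) y * lap3 ψ y
      = -3 * ∫ z : E3, (1 + ‖z‖ ^ 2) ^ (-5 / 2 : ℝ) * ψ (ε n • z) := by
    have hp : 0 < ε n ^ 2 := pow_pos (hεp n) 2
    rw [integral_mul_lap3 (newt_contDiff hp) hψ hc, integral_lap3_newt (hεp n)]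
  simp only [heq] at lim1
  rw [tendsto_nhds_unique lim1 (lim2.const_mul (-3)), integral_mul_const, newtMass]
  ring

/-- Convolution of two real functions on `ℝ³`. -/
noncomputable def conv (f g : E3 → ℝ) (x : E3) : ℝ := ∫ t, f t * g (x - t)

lemma conv_eq (f g : E3 → ℝ) :
    conv f g = convolution f g (ContinuousLinearMap.mul ℝ ℝ) volume := by
  ext x; simp [conv, convolution]

lemma conv_eq' (f g : E3 → ℝ) (x : E3) : conv f g x = ∫ t, f (x - t) * g t := by
  rw [conv, ← integral_sub_left_eq_self _ volume x]
  simp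

lemma conv_contDiff {f g : E3 → ℝ} (hf : LocallyIntegrable f) (hg : ContDiff ℝ ∞ g)
    (hc : HasCompactSupport g) : ContDiff ℝ ∞ (conv f g) := by
  rw [conv_eq]
  exact hc.contDiff_convolution_right _ hf hg

lemma pd3_conv {f g : E3 → ℝ} (hf : LocallyIntegrable f) (hg : ContDiff ℝ ∞ g)
    (hc : HasCompactSupport g) (i : Fin 3) : pd3 (conv f g) i = conv f (pd3 g i) := by
  ext x
  rw [conv_eq, conv_eq, pd3, pd,
    (hc.hasFDerivAt_convolution_right (ContinuousLinearMap.mul ℝ ℝ) hf (hg.of_le (by simp))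
      x).fderiv, convolution_precompR_apply _ hf (hc.fderiv ℝ)
      (hg.continuous_fderiv (by simp))]
  rfl

lemma lap3_conv {f g : E3 → ℝ} (hf : LocallyIntegrable f) (hg : ContDiff ℝ ∞ g)
    (hc : HasCompactSupport g) (x : E3) : lap3 (conv f g) x = conv f (lap3 g) x := by
  have h (i : Fin 3) : pd3 (pd3 (conv f g) i) i = conv f (pd3 (pd3 g i) i) := by
    rw [pd3_conv hf hg hc, pd3_conv hf (pd3_contDiff hg i) (pd3_hasCompactSupport hc i)]
  simp only [lap3, h, conv, Finset.mul_sum]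
  rw [integral_finsetSum]
  intro i _
  have h2 : Continuous fun t => pd3 (pd3 g i) i (x - t) :=
    (pd3_contDiff (pd3_contDiff hg i) i).continuous.comp (by fun_prop)
  have h3 : HasCompactSupport fun t => pd3 (pd3 g i) i (x - t) :=
    (pd3_hasCompactSupport (pd3_hasCompactSupport hc i) i).comp_homeomorph (Homeomorph.subLeft x)
  simpa using hf.integrable_smul_right_of_hasCompactSupport h2 h3

lemma comp_subLeft_hasCompactSupport {g : E3 → ℝ} (hc : HasCompactSupport g) (x : E3) :
    HasCompactSupport fun t => g (x - t) :=
  hc.comp_homeomorph (Homeomorph.subLeft x)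

/-- The Newtonian potential solves the Poisson equation. -/
lemma lap3_conv_newt {g : E3 → ℝ} (hg : ContDiff ℝ ∞ g) (hc : HasCompactSupport g) (x : E3) :
    lap3 (conv (newt 0) g) x = -newtMass * g x := by
  rw [lap3_conv newt_locallyIntegrable hg hc, conv]
  have h := integral_newt_mul_lap3 (ψ := fun t => g (x - t)) (hg.comp (by fun_prop))
    (comp_subLeft_hasCompactSupport hc x)
  simpa [lap3_comp_sub] using h

/-! ### Interior regularity and limits of harmonic functions -/

/-- Cauchy-type reproducing formula: functions harmonic on a ball of radius `2 * ε` about `x` are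
reproduced at `x` by a smooth kernel supported in the ball of radius `ε`. The kernel is, up to a
constant, the Laplacian of the Newtonian kernel smoothly cut off near the origin. -/
lemma exists_reproducing_kernel {ε : ℝ} (hε : 0 < ε) : ∃ η : E3 → ℝ, ContDiff ℝ ∞ η ∧
    HasCompactSupport η ∧ ∀ (f : E3 → ℝ) (x : E3), ContDiff ℝ ∞ f → HasCompactSupport f →
      (∀ y ∈ Metric.ball x (2 * ε), lap3 f y = 0) → f x = conv f η x := by
  let χ : ContDiffBump (0 : E3) := ⟨ε / 2, ε, by positivity, by linarith⟩
  set k : E3 → ℝ := fun y => newt 0 y * (1 - χ y) with hk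
  have hkc : ContDiff ℝ ∞ k := by
    rw [contDiff_iff_contDiffAt]
    intro y
    by_cases hy : y = 0
    · have : k =ᶠ[𝓝 y] fun _ => 0 := by
        rw [hy]
        filter_upwards [χ.eventuallyEq_one] with z hz
        simp [hk, hz]
      exact contDiffAt_const.congr_of_eventuallyEq this
    · exact (newt_contDiffAt (by positivity)).mul (contDiffAt_const.sub χ.contDiffAt)
  have hkfar (y : E3) (hy : ε < ‖y‖) : lap3 k y = 0 := by
    have : k =ᶠ[𝓝 y] newt 0 := by
      filter_upwards [(isOpen_lt continuous_const continuous_norm).mem_nhds hy] with z hz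
      rw [hk]
      beta_reduce
      rw [χ.zero_of_le_dist (by simpa [χ] using le_of_lt hz)]
      simp
    rw [(lap3_congr this).eq_of_nhds, lap3_newt (by nlinarith)]
    simp
  have hcs : HasCompactSupport (lap3 k) := by
    refine HasCompactSupport.intro (isCompact_closedBall (0 : E3) ε) fun y hy => hkfar y ?_
    simpa using hy
  refine ⟨fun y => -newtMass⁻¹ * lap3 k y, contDiff_const.mul (lap3_contDiff hkc),
    hcs.mul_left, fun f x hf hfc hx => ?_⟩
  have hψ : ContDiff ℝ ∞ fun t => f (x - t) := hf.comp (by fun_prop)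
  have hψc := comp_subLeft_hasCompactSupport hfc x
  have h1 := integral_newt_mul_lap3 hψ hψc
  have h2 := integral_mul_lap3 hkc hψ hψc
  have h3 : ∀ t, newt 0 t * lap3 (fun t => f (x - t)) t = k t * lap3 (fun t => f (x - t)) t := by
    intro t
    by_cases ht : ‖t‖ < 2 * ε
    · rw [lap3_comp_sub, hx _ (by simpa using ht)]
      simp
    · rw [hk]
      beta_reduce
      rw [χ.zero_of_le_dist (by simp [χ]; linarith)]
      simp
  simp only [h3, h2, sub_zero] at h1
  rw [conv_eq']
  have h6 : ∀ t, f (x - t) * (-newtMass⁻¹ * lap3 k t)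
      = -newtMass⁻¹ * (lap3 k t * f (x - t)) := fun t => by ring
  simp only [h6, integral_const_mul, h1]
  field_simp [newtMass_pos.ne']

lemma tendsto_conv {f : ℕ → E3 → ℝ} {g η : E3 → ℝ} (hf : ∀ n, Continuous (f n))
    (hg : Continuous g) (hgc : HasCompactSupport g) (h : TendstoUniformly f g atTop)
    (hη : Continuous η) (hηc : HasCompactSupport η) (x : E3) :
    Tendsto (fun n => conv (f n) η x) atTop (𝓝 (conv g η x)) := by
  obtain ⟨M, hM⟩ := hgc.exists_bound_of_continuous hg
  have hη' : Continuous fun t => η (x - t) := by fun_prop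
  refine tendsto_integral_filter_of_dominated_convergence
    (fun t => (1 + M) * ‖η (x - t)‖) ?_ ?_ ?_ ?_
  · exact Eventually.of_forall fun n => ((hf n).mul hη').aestronglyMeasurable
  · filter_upwards [Metric.tendstoUniformly_iff.1 h 1 one_pos] with n hn
    filter_upwards with t
    rw [norm_mul]
    gcongr
    have h1 := hn t
    have h2 := hM t
    rw [dist_comm, dist_eq_norm] at h1
    have := norm_le_norm_sub_add (f n t) (g t)
    linarith
  · exact ((hη'.integrable_of_hasCompactSupport
      (comp_subLeft_hasCompactSupport hηc x)).norm).const_mul _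
  · filter_upwards with t
    exact (h.tendsto_at t).mul_const _

/-- Weierstrass-type theorem: a locally uniform limit of harmonic functions is smooth and
harmonic, because the reproducing formula passes to the limit. -/
lemma harmonic_limit {h : ℕ → E3 → ℝ} {g : E3 → ℝ} {x₀ : E3} {V : Set E3} (hV : V ∈ 𝓝 x₀)
    (hh : ∀ n, ContDiff ℝ ∞ (h n)) (hl : ∀ n, ∀ y ∈ V, lap3 (h n) y = 0)
    (hu : TendstoUniformlyOn h g atTop V) : ContDiffAt ℝ ∞ g x₀ ∧ lap3 g x₀ = 0 := by
  obtain ⟨r, hr, hrV⟩ := Metric.mem_nhds_iff.1 hV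
  obtain ⟨ε, hε, rfl⟩ : ∃ ε > 0, r = 4 * ε := ⟨r / 4, by positivity, by ring⟩
  obtain ⟨η, hη, hηc, hrep⟩ := exists_reproducing_kernel hε
  let θ : ContDiffBump x₀ := ⟨3 * ε, 4 * ε, by positivity, by linarith⟩
  set f : ℕ → E3 → ℝ := fun n y => θ y * h n y with hf
  set F : E3 → ℝ := fun y => θ y * g y with hF
  have hfs (n : ℕ) : ContDiff ℝ ∞ (f n) := θ.contDiff.mul (hh n)
  have hfc (n : ℕ) : HasCompactSupport (f n) := θ.hasCompactSupport.mul_right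
  have hFc : HasCompactSupport F := θ.hasCompactSupport.mul_right
  have hfu : TendstoUniformly f F atTop := by
    rw [Metric.tendstoUniformly_iff]
    intro δ hδ
    filter_upwards [Metric.tendstoUniformlyOn_iff.1 hu δ hδ] with n hn y
    by_cases hy : y ∈ Metric.ball x₀ (4 * ε)
    · have := hn y (hrV hy)
      rw [Real.dist_eq] at this ⊢
      rw [hf, hF]
      beta_reduce
      rw [← mul_sub, abs_mul, abs_of_nonneg θ.nonneg]
      have := θ.le_one (x := y)
      have := θ.nonneg (x := y)
      nlinarith [abs_nonneg (g y - h n y)]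
    · have : θ y = 0 := θ.zero_of_le_dist (by simpa [θ] using hy)
      simpa [hf, hF, this] using hδ
  have hFcont : Continuous F := hfu.continuous (Frequently.of_forall fun n => (hfs n).continuous)
  have hfl (n : ℕ) (y : E3) (hy : y ∈ Metric.ball x₀ (3 * ε)) : lap3 (f n) y = 0 := by
    have : f n =ᶠ[𝓝 y] h n := by
      filter_upwards [Metric.isOpen_ball.mem_nhds hy] with z hz
      have : θ z = 1 := θ.one_of_mem_closedBall (Metric.ball_subset_closedBall hz)
      simp [hf, this]
    rw [(lap3_congr this).eq_of_nhds]
    exact hl n y (hrV (Metric.ball_subset_ball (by linarith) hy))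
  have hfr (n : ℕ) (x : E3) (hx : x ∈ Metric.ball x₀ ε) : f n x = conv (f n) η x := by
    refine hrep _ x (hfs n) (hfc n) fun y hy => hfl n y ?_
    exact Metric.ball_subset_ball' (by rw [Metric.mem_ball] at hx; linarith) hy
  have hFr (x : E3) (hx : x ∈ Metric.ball x₀ ε) : F x = conv F η x := by
    refine tendsto_nhds_unique (hfu.tendsto_at x) ?_
    have := tendsto_conv (fun n => (hfs n).continuous) hFcont hFc hfu hη.continuous hηc x
    refine this.congr fun n => (hfr n x hx).symm
  have hnear : ∀ᶠ x in 𝓝 x₀, x ∈ Metric.ball x₀ ε := Metric.ball_mem_nhds x₀ hε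
  have hgF : g =ᶠ[𝓝 x₀] conv F η := by
    filter_upwards [hnear, θ.eventuallyEq_one] with x hx hθ
    rw [← hFr x hx]
    simp [hF, hθ]
  have hFli : LocallyIntegrable F := hFcont.locallyIntegrable
  refine ⟨(conv_contDiff hFli hη hηc).contDiffAt.congr_of_eventuallyEq hgF, ?_⟩
  rw [(lap3_congr hgF).eq_of_nhds, lap3_conv hFli hη hηc]
  refine tendsto_nhds_unique (tendsto_conv (fun n => (hfs n).continuous) hFcont hFc hfu
    (lap3_contDiff hη).continuous (lap3_hasCompactSupport hηc) x₀) ?_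
  refine tendsto_const_nhds.congr fun n => ?_
  rw [← lap3_conv (hfs n).continuous.locallyIntegrable hη hηc]
  have : conv (f n) η =ᶠ[𝓝 x₀] f n := by
    filter_upwards [hnear] with x hx
    exact (hfr n x hx).symm
  rw [(lap3_congr this).eq_of_nhds]
  exact (hfl n x₀ (Metric.mem_ball_self (by positivity))).symm

/-! ### Pole pushing -/

/-- A uniformly bounded family of holomorphic functions is holomorphic as a map into `ℓ^∞`. -/
lemma differentiableOn_lp_of_bounded {I : Type*} {W : Set ℂ} (hW : IsOpen W) {f : I → ℂ → ℂ}
    (hf : ∀ i, DifferentiableOn ℂ (f i) W) {A : ℝ} (hA : ∀ i, ∀ z ∈ W, ‖f i z‖ ≤ A)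
    {Γ : ℂ → lp (fun _ : I => ℂ) ⊤} (hΓ : ∀ z ∈ W, ∀ i, Γ z i = f i z) :
    DifferentiableOn ℂ Γ W := by
  intro z hz
  obtain ⟨r, hr, hrW⟩ := Metric.isOpen_iff.1 hW z hz
  rcases isEmpty_or_nonempty I with hI | ⟨⟨i₀⟩⟩
  · have : Subsingleton (lp (fun _ : I => ℂ) ⊤) := ⟨fun a b => lp.ext (funext fun i => hI.elim i)⟩
    have : Γ = fun _ => 0 := funext fun _ => Subsingleton.elim _ _
    rw [this]
    exact differentiableWithinAt_const _
  have hA0 : 0 ≤ A := (norm_nonneg _).trans (hA i₀ z hz)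
  obtain ⟨ρ, hρ, rfl⟩ : ∃ ρ > 0, r = 3 * ρ := ⟨r / 3, by positivity, by ring⟩
  have hdiff (i : I) : DifferentiableOn ℂ (f i) (Metric.ball z (3 * ρ)) := (hf i).mono hrW
  have cauchy (n : ℕ) (i : I) (w : ℂ) (hw : w ∈ Metric.ball z ρ) :
      ‖iteratedDeriv n (f i) w‖ ≤ n.factorial * A / ρ ^ n := by
    have hsub : Metric.closedBall w ρ ⊆ Metric.ball z (3 * ρ) := fun u hu => by
      rw [Metric.mem_closedBall] at hu
      rw [Metric.mem_ball] at hw ⊢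
      linarith [dist_triangle u w z]
    refine Complex.norm_iteratedDeriv_le_of_forall_mem_sphere_norm_le n hρ ?_ ?_
    · exact ((hdiff i).mono hsub).diffContOnCl_ball subset_rfl
    · exact fun u hu => hA i u (hrW (hsub (Metric.sphere_subset_closedBall hu)))
  set M : ℝ := 2 * A / ρ ^ 2 with hM
  have hM0 : 0 ≤ M := by positivity
  have hzρ : z ∈ Metric.ball z ρ := Metric.mem_ball_self hρ
  let Γ' : lp (fun _ : I => ℂ) ⊤ := ⟨fun i => deriv (f i) z, memℓp_infty
    ⟨A / ρ, by rintro _ ⟨i, rfl⟩; simpa using cauchy 1 i z hzρ⟩⟩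
  have hsub3 : Metric.ball z ρ ⊆ Metric.ball z (3 * ρ) := Metric.ball_subset_ball (by linarith)
  -- Taylor's estimate to second order, with a constant independent of `i`
  have taylor (i : I) (w : ℂ) (hw : w ∈ Metric.ball z ρ) :
      ‖f i w - f i z - (w - z) * deriv (f i) z‖ ≤ M * ‖w - z‖ ^ 2 := by
    have hd (u : ℂ) (hu : u ∈ Metric.ball z ρ) : HasDerivAt (f i) (deriv (f i) u) u :=
      ((hdiff i).differentiableAt (Metric.isOpen_ball.mem_nhds (hsub3 hu))).hasDerivAt
    have hd2 (u : ℂ) (hu : u ∈ Metric.ball z ρ) :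
        HasDerivAt (deriv (f i)) (iteratedDeriv 2 (f i) u) u := by
      rw [iteratedDeriv_succ, iteratedDeriv_one]
      exact (((hdiff i).deriv Metric.isOpen_ball).differentiableAt
        (Metric.isOpen_ball.mem_nhds (hsub3 hu))).hasDerivAt
    have h1 (u : ℂ) (hu : u ∈ Metric.ball z ρ) :
        ‖deriv (f i) u - deriv (f i) z‖ ≤ M * ‖u - z‖ :=
      (convex_ball z ρ).norm_image_sub_le_of_norm_hasDerivWithin_le
        (fun v hv => (hd2 v hv).hasDerivWithinAt)
        (fun v hv => by simpa [hM] using cauchy 2 i v hv) hzρ hu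
    have hsub' : Metric.closedBall z ‖w - z‖ ⊆ Metric.ball z ρ := by
      refine Metric.closedBall_subset_ball ?_
      simpa [dist_eq_norm] using hw
    have h2 := (convex_closedBall z ‖w - z‖).norm_image_sub_le_of_norm_hasDerivWithin_le
      (f := fun u => f i u - u * deriv (f i) z) (f' := fun u => deriv (f i) u - 1 * deriv (f i) z)
      (C := M * ‖w - z‖) (x := z) (y := w)
      (fun v hv => ((hd v (hsub' hv)).sub ((hasDerivAt_id v).mul_const _)).hasDerivWithinAt)
      (fun v hv => by
        rw [one_mul]
        refine (h1 v (hsub' hv)).trans ?_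
        gcongr
        simpa [dist_eq_norm] using hv)
      (by simp) (by simp [dist_eq_norm])
    calc _ = ‖f i w - w * deriv (f i) z - (f i z - z * deriv (f i) z)‖ := by congr 1; ring
      _ ≤ _ := h2
      _ = _ := by ring
  have hderiv : HasDerivAt Γ Γ' z := by
    rw [hasDerivAt_iff_isLittleO]
    have hO : (fun w => Γ w - Γ z - (w - z) • Γ') =O[𝓝 z] fun w => ‖w - z‖ ^ 2 := by
      refine Asymptotics.IsBigO.of_bound M ?_
      filter_upwards [Metric.ball_mem_nhds z hρ] with w hw
      refine lp.norm_le_of_forall_le (by positivity) fun i => ?_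
      have h := taylor i w hw
      have e : (Γ w - Γ z - (w - z) • Γ') i = f i w - f i z - (w - z) * deriv (f i) z := by
        rw [← hΓ w (hrW (hsub3 hw)) i, ← hΓ z hz i]
        rfl
      rw [e]
      simpa using h
    refine hO.trans_isLittleO ?_
    have : (fun w => ‖w - z‖ ^ 2) =o[𝓝 z] fun w => ‖w - z‖ := by
      have h0 : Tendsto (fun w => ‖w - z‖) (𝓝 z) (𝓝 0) := by
        have : Continuous fun w => ‖w - z‖ := by fun_prop
        simpa using this.tendsto z
      have := (Asymptotics.isLittleO_pow_id (n := 2) (𝕜 := ℝ) (by norm_num)).comp_tendsto h0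
      exact this
    exact this.of_norm_right
  exact hderiv.differentiableAt.differentiableWithinAt

/-- Simultaneous approximation for a uniformly bounded family of holomorphic functions: their values
at any point of a connected open set are approximated, with the same coefficients for the whole
family, by their values on any set having an accumulation point. -/
lemma uniform_identity_approx {I : Type*} {W : Set ℂ} (hW : IsOpen W) (hWc : IsPreconnected W)
    {f : I → ℂ → ℂ} (hf : ∀ i, DifferentiableOn ℂ (f i) W) {A : ℝ}
    (hA : ∀ i, ∀ z ∈ W, ‖f i z‖ ≤ A) {T : Set ℂ} (hTW : T ⊆ W) {z₀ z₁ : ℂ} (hz₀ : z₀ ∈ W)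
    (hz₁ : z₁ ∈ W) (hT : ∃ᶠ z in 𝓝[≠] z₀, z ∈ T) {ε : ℝ} (hε : 0 < ε) :
    ∃ l : ℂ →₀ ℂ, (l.support : Set ℂ) ⊆ T ∧
      ∀ i, ‖f i z₁ - ∑ z ∈ l.support, l z * f i z‖ < ε := by
  classical
  let Γ : ℂ → lp (fun _ : I => ℂ) ⊤ := fun z => if h : z ∈ W then
    ⟨fun i => f i z, memℓp_infty ⟨A, by rintro _ ⟨i, rfl⟩; exact hA i z h⟩⟩ else 0
  have hΓ : ∀ z ∈ W, ∀ i, Γ z i = f i z := fun z hz i => by simp [Γ, hz]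
  have hΓd := differentiableOn_lp_of_bounded hW hf hA hΓ
  -- the class of `Γ` modulo the closed span `M` of `Γ '' T` is holomorphic and vanishes on `T`,
  -- so it vanishes identically by the identity theorem
  set M : Submodule ℂ (lp (fun _ : I => ℂ) ⊤) := (Submodule.span ℂ (Γ '' T)).topologicalClosure
  have : IsClosed (M : Set (lp (fun _ : I => ℂ) ⊤)) := Submodule.isClosed_topologicalClosure _
  let q : lp (fun _ : I => ℂ) ⊤ →L[ℂ] (lp (fun _ : I => ℂ) ⊤) ⧸ M :=
    M.mkQ.mkContinuous 1 fun x => by simpa using Submodule.Quotient.norm_mk_le M x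
  have hq (x) : q x = 0 ↔ x ∈ M := by
    simp [q]
  have han : AnalyticOnNhd ℂ (fun z => q (Γ z)) W := fun z hz =>
    (q.analyticAt _).comp (hΓd.analyticAt (hW.mem_nhds hz))
  have hzero := han.eqOn_zero_of_preconnected_of_frequently_eq_zero hWc hz₀ (hT.mono fun z hz =>
    (hq _).2 (Submodule.le_topologicalClosure _ (Submodule.subset_span ⟨z, hz, rfl⟩)))
  have hmem : Γ z₁ ∈ closure (Submodule.span ℂ (Γ '' T) : Set (lp (fun _ : I => ℂ) ⊤)) := by
    have := (hq _).1 (hzero hz₁)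
    exact this
  obtain ⟨p, hp, hdist⟩ := Metric.mem_closure_iff.1 hmem ε hε
  obtain ⟨l, hl, rfl⟩ := (Finsupp.mem_span_image_iff_linearCombination ℂ).1 hp
  refine ⟨l, hl, fun i => ?_⟩
  rw [dist_eq_norm] at hdist
  refine lt_of_le_of_lt ?_ hdist
  refine le_trans (le_of_eq ?_) (lp.norm_apply_le_norm (by simp) _ i)
  rw [lp.coeFn_sub, Pi.sub_apply, hΓ z₁ hz₁, Finsupp.linearCombination_apply, Finsupp.sum,
    lp.coeFn_sum, Finset.sum_apply]
  congr 2
  refine Finset.sum_congr rfl fun z hz => ?_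
  rw [lp.coeFn_smul, Pi.smul_apply, hΓ z (hTW (hl hz)), smul_eq_mul]

/-- Pole pushing: if no segment from the origin to a point of `K` meets `S`, then the Newtonian
kernel `1 / ‖x - y‖` is a uniform limit on `K × S` of combinations of its dilations
`1 / ‖s • x - y‖` with arbitrarily small `s > 0`. Indeed `s ↦ 1 / ‖s • x - y‖` extends to a bounded
holomorphic function on a fixed complex neighbourhood of `[0, 1]`. -/
lemma newt_approx {K S : Set E3} (hK : IsCompact K) (hS : IsCompact S)
    (hKS : ∀ s ∈ Icc (0 : ℝ) 1, ∀ x ∈ K, ∀ y ∈ S, s • x ≠ y) {s₀ : ℝ} (hs₀ : 0 < s₀) {ε : ℝ}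
    (hε : 0 < ε) : ∃ (J : Finset ℝ) (c : ℝ → ℝ), (∀ s ∈ J, 0 < s ∧ s < s₀) ∧
      ∀ x ∈ K, ∀ y ∈ S, |newt 0 (x - y) - ∑ s ∈ J, c s * newt 0 (s • x - y)| < ε := by
  classical
  obtain ⟨m, hm, hmle⟩ : ∃ m > 0, ∀ s ∈ Icc (0 : ℝ) 1, ∀ x ∈ K, ∀ y ∈ S,
      m ≤ ‖s • x - y‖ ^ 2 := by
    obtain ⟨m, hm, h⟩ := ((isCompact_Icc (a := (0 : ℝ)) (b := 1)).prod (hK.prod hS)).exists_forall_le'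
      (f := fun p : ℝ × E3 × E3 => ‖p.1 • p.2.1 - p.2.2‖ ^ 2) (by fun_prop) (a := 0)
      (fun p hp => by
        have := sub_ne_zero.2 (hKS _ hp.1 _ hp.2.1 _ hp.2.2)
        positivity)
    exact ⟨m, hm, fun s hs x hx y hy => h (s, x, y) ⟨hs, hx, hy⟩⟩
  obtain ⟨R, hR, hRK, hRS⟩ : ∃ R > 0, (∀ x ∈ K, ‖x‖ ≤ R) ∧ ∀ y ∈ S, ‖y‖ ≤ R := by
    obtain ⟨R, hR, h⟩ := (hK.union hS).isBounded.exists_pos_norm_le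
    exact ⟨R, hR, fun x hx => h x (.inl hx), fun y hy => h y (.inr hy)⟩
  obtain ⟨δ, hδ, hδ1, hδm⟩ : ∃ δ > 0, δ ≤ 1 ∧ 5 * R ^ 2 * δ ≤ m / 2 := by
    refine ⟨min 1 (m / (10 * R ^ 2)), by positivity, min_le_left _ _, ?_⟩
    calc 5 * R ^ 2 * min 1 (m / (10 * R ^ 2)) ≤ 5 * R ^ 2 * (m / (10 * R ^ 2)) := by
          gcongr; exact min_le_right _ _
      _ = m / 2 := by field_simp; norm_num
  let I : Set ℂ := (fun s : ℝ => (s : ℂ)) '' Icc (0 : ℝ) 1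
  let W : Set ℂ := Metric.thickening δ I
  have hIW : I ⊆ W := Metric.self_subset_thickening hδ I
  have hWc : IsPreconnected W := by
    have : Convex ℝ I := (convex_Icc (0 : ℝ) 1).linear_image Complex.ofRealCLM.toLinearMap
    exact (this.thickening δ).isPreconnected
  let q : E3 → E3 → ℂ → ℂ := fun x y z =>
    ((‖x‖ ^ 2 : ℝ) : ℂ) * z ^ 2 - 2 * z * ((inner ℝ x y : ℝ) : ℂ) + ((‖y‖ ^ 2 : ℝ) : ℂ)
  have hqs (x y : E3) (s : ℝ) : q x y s = ((‖s • x - y‖ ^ 2 : ℝ) : ℂ) := by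
    rw [norm_sub_sq_real, norm_smul, mul_pow, real_inner_smul_left]
    simp only [q]
    push_cast
    rw [← Complex.ofReal_pow ‖s‖, Real.norm_eq_abs, sq_abs]
    push_cast
    ring
  have hre (x y : E3) (hx : x ∈ K) (hy : y ∈ S) (z : ℂ) (hz : z ∈ W) :
      m / 2 ≤ (q x y z).re := by
    obtain ⟨_, ⟨s, hs, rfl⟩, hzs⟩ := Metric.mem_thickening_iff.1 hz
    rw [dist_eq_norm] at hzs
    have hs1 : ‖(s : ℂ)‖ ≤ 1 := by
      rw [Complex.norm_real, Real.norm_eq_abs, abs_of_nonneg hs.1]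
      exact hs.2
    have hz2 : ‖z‖ ≤ 2 := by
      have := norm_le_norm_sub_add z (s : ℂ)
      linarith
    have hxy : |inner ℝ x y| ≤ R ^ 2 := by
      refine (abs_real_inner_le_norm x y).trans ?_
      rw [sq]
      exact mul_le_mul (hRK x hx) (hRS y hy) (norm_nonneg _) hR.le
    have hx2 : ‖x‖ ^ 2 ≤ R ^ 2 := by
      have := hRK x hx
      gcongr
    have hfac : q x y z - q x y s
        = (z - s) * (((‖x‖ ^ 2 : ℝ) : ℂ) * (z + s) - 2 * ((inner ℝ x y : ℝ) : ℂ)) := by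
      simp only [q]; ring
    have hle : ‖q x y z - q x y s‖ ≤ δ * (5 * R ^ 2) := by
      rw [hfac, norm_mul]
      refine mul_le_mul hzs.le ?_ (norm_nonneg _) hδ.le
      calc _ ≤ ‖((‖x‖ ^ 2 : ℝ) : ℂ)‖ * (‖z‖ + ‖(s : ℂ)‖) + 2 * ‖((inner ℝ x y : ℝ) : ℂ)‖ := by
            refine (norm_sub_le _ _).trans ?_
            rw [norm_mul, norm_mul, Complex.norm_ofNat]
            gcongr
            exact norm_add_le _ _
        _ ≤ R ^ 2 * (2 + 1) + 2 * R ^ 2 := by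
            rw [Complex.norm_real (‖x‖ ^ 2), Complex.norm_real (inner ℝ x y), Real.norm_eq_abs,
              Real.norm_eq_abs, abs_of_nonneg (by positivity : 0 ≤ ‖x‖ ^ 2)]
            gcongr
        _ = 5 * R ^ 2 := by ring
    have h1 := hmle s hs x hx y hy
    have h2 := (abs_le.1 ((Complex.abs_re_le_norm _).trans hle)).1
    rw [Complex.sub_re, hqs, Complex.ofReal_re] at h2
    linarith
  let f : K × S → ℂ → ℂ := fun p z => q p.1 p.2 z ^ ((-1 / 2 : ℝ) : ℂ)
  have hf (p : K × S) : DifferentiableOn ℂ (f p) W := by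
    have hq : Differentiable ℂ (q p.1 p.2) := by
      simp only [q]; fun_prop
    refine hq.differentiableOn.cpow_const fun z hz => Or.inl ?_
    have := hre p.1 p.2 p.1.2 p.2.2 z hz
    linarith
  have hA (p : K × S) (z : ℂ) (hz : z ∈ W) : ‖f p z‖ ≤ (m / 2) ^ (-1 / 2 : ℝ) := by
    have h1 := hre p.1 p.2 p.1.2 p.2.2 z hz
    have h2 := Complex.re_le_norm (q p.1 p.2 z)
    rw [Complex.norm_cpow_of_ne_zero (fun h => by rw [h] at h1; simp at h1; linarith)]
    simp only [Complex.ofReal_re, Complex.ofReal_im, mul_zero, Real.exp_zero, div_one]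
    exact Real.rpow_le_rpow_of_nonpos (by positivity) (by linarith) (by norm_num)
  let T : Set ℂ := (fun s : ℝ => (s : ℂ)) '' Ioo 0 (min s₀ 1)
  have hTI : T ⊆ I := image_mono fun s hs => ⟨hs.1.le, hs.2.le.trans (min_le_right _ _)⟩
  have hT : ∃ᶠ z in 𝓝[≠] (0 : ℂ), z ∈ T := by
    have ht : Tendsto (fun s : ℝ => (s : ℂ)) (𝓝[>] 0) (𝓝[≠] (0 : ℂ)) := by
      refine tendsto_nhdsWithin_iff.2 ⟨?_, ?_⟩
      · have := Complex.continuous_ofReal.tendsto 0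
        rw [Complex.ofReal_zero] at this
        exact this.mono_left nhdsWithin_le_nhds
      · filter_upwards [self_mem_nhdsWithin] with s hs
        simpa using (ne_of_gt hs)
    refine ht.frequently (Eventually.frequently ?_)
    filter_upwards [Ioo_mem_nhdsGT (show (0 : ℝ) < min s₀ 1 by positivity)] with s hs
    exact ⟨s, hs, rfl⟩
  obtain ⟨l, hl, happ⟩ := uniform_identity_approx Metric.isOpen_thickening hWc hf hA
    (hTI.trans hIW) (hIW ⟨0, by simp, by simp⟩) (hIW ⟨1, by simp, Complex.ofReal_one⟩) hT hε
  have hfs (p : K × S) (s : ℝ) : f p s = ((newt 0 (s • (p.1 : E3) - p.2) : ℝ) : ℂ) := by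
    simp only [f, hqs, newt, add_zero]
    rw [Complex.ofReal_cpow (by positivity)]
  refine ⟨l.support.image Complex.re, fun s => (l s).re, ?_, fun x hx y hy => ?_⟩
  · intro s hs
    obtain ⟨z, hz, rfl⟩ := Finset.mem_image.1 hs
    obtain ⟨t, ht, rfl⟩ := hl hz
    exact ⟨ht.1, ht.2.trans_le (min_le_left _ _)⟩
  · have hreal (z : ℂ) (hz : z ∈ l.support) : ((z.re : ℝ) : ℂ) = z := by
      obtain ⟨t, ht, rfl⟩ := hl hz
      simp
    have h := (Complex.abs_re_le_norm _).trans_lt (happ (⟨x, hx⟩, ⟨y, hy⟩))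
    have h1 := hfs (⟨x, hx⟩, ⟨y, hy⟩) 1
    rw [Complex.ofReal_one, one_smul] at h1
    rw [Complex.sub_re, h1, Complex.ofReal_re, Complex.re_sum] at h
    rw [Finset.sum_image fun z hz w hw hzw => by rw [← hreal z hz, ← hreal w hw, hzw]]
    refine lt_of_eq_of_lt ?_ h
    congr 2
    refine Finset.sum_congr rfl fun z hz => ?_
    have h2 := hfs (⟨x, hx⟩, ⟨y, hy⟩) z.re
    rw [hreal z hz] at h2
    rw [h2, Complex.re_mul_ofReal]
    beta_reduce
    rw [hreal z hz]

/-! ### Approximation and exhaustion -/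

/-- Solution of the Poisson equation with compactly supported data `g` on a large ball, small on a
compact set `K` such that no segment from the origin to `K` meets the support of `g`: the Newtonian
potential of `g`, minus a combination of its dilations `u (s • ·)`, which are harmonic on that ball
for small `s`. -/
lemma exists_small_solution {K : Set E3} (hK : IsCompact K) (hK0 : 0 ∈ K) {g : E3 → ℝ}
    (hg : ContDiff ℝ ∞ g) (hc : HasCompactSupport g)
    (hKg : ∀ s ∈ Icc (0 : ℝ) 1, ∀ x ∈ K, s • x ∉ tsupport g) {R : ℝ} (hR : 0 < R) {ε : ℝ}
    (hε : 0 < ε) : ∃ v : E3 → ℝ, ContDiff ℝ ∞ v ∧ (∀ y ∈ Metric.ball 0 R, lap3 v y = g y) ∧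
      ∀ x ∈ K, |v x| ≤ ε := by
  have h0 : (0 : E3) ∉ tsupport g := by
    simpa using hKg 0 (by simp) 0 hK0
  obtain ⟨r, hr, hrg⟩ := Metric.isOpen_iff.1 (isClosed_tsupport g).isOpen_compl 0 h0
  have hN := newtMass_pos
  set A : ℝ := ∫ t, |g t| with hA
  have hA0 : 0 ≤ A := integral_nonneg fun t => abs_nonneg _
  obtain ⟨J, c, hJ, happ⟩ := newt_approx (ε := ε * newtMass / (1 + A)) hK hc
    (fun s hs x hx y hy h => hKg s hs x hx (h ▸ hy)) (div_pos hr hR) (by positivity)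
  set u : E3 → ℝ := fun y => -newtMass⁻¹ * conv (newt 0) g y with hu
  have hus : ContDiff ℝ ∞ u :=
    contDiff_const.mul (conv_contDiff newt_locallyIntegrable hg hc)
  have hul (y : E3) : lap3 u y = g y := by
    rw [hu, lap3_const_mul, lap3_conv_newt hg hc]
    field_simp
  have hs (s : ℝ) : ContDiff ℝ ∞ fun y => c s * u (s • y) :=
    contDiff_const.mul (hus.comp (contDiff_const_smul s))
  set p : E3 → ℝ := fun y => ∑ s ∈ J, c s * u (s • y) with hp
  have hps : ContDiff ℝ ∞ p := ContDiff.sum fun s _ => hs s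
  refine ⟨fun y => u y - p y, hus.sub hps, fun y hy => ?_, fun x hx => ?_⟩
  · rw [lap3_sub hus.contDiffAt hps.contDiffAt, hul, hp, lap3_sum _ hs, Finset.sum_eq_zero,
      sub_zero]
    intro s hsJ
    rw [lap3_const_mul, lap3_comp_smul, hul]
    have : s • y ∉ tsupport g := by
      refine hrg ?_
      rw [mem_ball_zero_iff] at hy ⊢
      rw [norm_smul, Real.norm_eq_abs, abs_of_pos (hJ s hsJ).1]
      calc s * ‖y‖ ≤ s * R := by
            have := (hJ s hsJ).1
            gcongr
        _ < r / R * R := by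
            have := (hJ s hsJ).2
            gcongr
        _ = r := by field_simp
    rw [image_eq_zero_of_notMem_tsupport this]
    ring
  · have hInt (z : E3) : Integrable fun t => newt 0 (z - t) * g t := by
      have := (hc.convolutionExists_right (ContinuousLinearMap.mul ℝ ℝ) newt_locallyIntegrable
        hg.continuous z).integrable_swap (μ := volume)
      simpa using this
    have e : u x - p x = -newtMass⁻¹ *
        ∫ t, (newt 0 (x - t) - ∑ s ∈ J, c s * newt 0 (s • x - t)) * g t := by
      simp only [sub_mul, Finset.sum_mul, mul_assoc]
      rw [integral_sub (hInt x) (integrable_finsetSum _ fun s _ => (hInt _).const_mul _),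
        integral_finsetSum _ fun s _ => (hInt _).const_mul _]
      simp only [integral_const_mul, hp, hu, conv_eq', mul_sub, Finset.mul_sum]
      congr 1
      exact Finset.sum_congr rfl fun s _ => by ring
    have hb : |∫ t, (newt 0 (x - t) - ∑ s ∈ J, c s * newt 0 (s • x - t)) * g t|
        ≤ ε * newtMass / (1 + A) * A := by
      rw [hA, ← integral_const_mul, ← Real.norm_eq_abs]
      refine norm_integral_le_of_norm_le
        ((hg.continuous.integrable_of_hasCompactSupport hc).abs.const_mul _)
        (Eventually.of_forall fun t => ?_)
      rw [norm_mul, Real.norm_eq_abs, Real.norm_eq_abs]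
      by_cases ht : t ∈ tsupport g
      · gcongr
        exact (happ x hx t ht).le
      · simp [image_eq_zero_of_notMem_tsupport ht]
    beta_reduce
    rw [e, abs_mul, abs_neg, abs_inv, abs_of_pos hN]
    calc _ ≤ newtMass⁻¹ * (ε * newtMass / (1 + A) * A) := by gcongr
      _ = ε * (A / (1 + A)) := by field_simp
      _ ≤ ε * 1 := by
          gcongr
          exact div_le_one_of_le₀ (by linarith) (by linarith)
      _ = ε := mul_one ε

/-- Smooth truncation: a function smooth on `U` agrees near a given compact subset of `U` with a
smooth compactly supported function, which moreover vanishes wherever the given one does. -/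
lemma exists_truncation {U L : Set E3} (hU : IsOpen U) (hL : IsCompact L) (hLU : L ⊆ U)
    {h : E3 → ℝ} (hh : ContDiffOn ℝ ∞ h U) : ∃ g : E3 → ℝ, ContDiff ℝ ∞ g ∧ HasCompactSupport g ∧
      (∀ᶠ y in 𝓝ˢ L, g y = h y) ∧ ∀ y, h y = 0 → g y = 0 := by
  obtain ⟨L₁, hL₁, hLL₁, hL₁U⟩ := exists_compact_between hL hU hLU
  obtain ⟨L₂, hL₂, hL₁L₂, hL₂U⟩ := exists_compact_between hL₁ hU hL₁U
  obtain ⟨χ, hχ0, hχ1, -⟩ := exists_contMDiffMap_zero_one_of_isClosed (n := ⊤)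
    (modelWithCornersSelf ℝ E3) (s := (interior L₂)ᶜ) (t := L₁) isOpen_interior.isClosed_compl
    hL₁.isClosed (disjoint_left.2 fun x hx hx' => hx (hL₁L₂ hx'))
  have hχ : ContDiff ℝ ∞ χ := χ.contMDiff.contDiff
  have hout (y : E3) (hy : y ∉ L₂) : χ y = 0 := hχ0 fun h => hy (interior_subset h)
  refine ⟨fun y => χ y * h y, contDiff_iff_contDiffAt.2 fun x => ?_, ?_, ?_, ?_⟩
  · by_cases hx : x ∈ L₂
    · exact hχ.contDiffAt.mul (hh.contDiffAt (hU.mem_nhds (hL₂U hx)))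
    · have : (fun y => χ y * h y) =ᶠ[𝓝 x] fun _ => 0 := by
        filter_upwards [hL₂.isClosed.isOpen_compl.mem_nhds hx] with y hy
        rw [hout y hy, zero_mul]
      exact contDiffAt_const.congr_of_eventuallyEq this
  · exact HasCompactSupport.intro hL₂ fun y hy => by rw [hout y hy, zero_mul]
  · filter_upwards [isOpen_interior.mem_nhdsSet.2 hLL₁] with y hy
    rw [hχ1 (interior_subset hy)]
    simp
  · intro y hy
    simp [hy]

lemma exists_solution_near {U L : Set E3} (hU : IsOpen U) (hL : IsCompact L) (hLU : L ⊆ U)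
    {g : E3 → ℝ} (hg : ContDiffOn ℝ ∞ g U) :
    ∃ v : E3 → ℝ, ContDiff ℝ ∞ v ∧ ∀ᶠ y in 𝓝ˢ L, lap3 v y = g y := by
  obtain ⟨g', hg', hc, heq, -⟩ := exists_truncation hU hL hLU hg
  refine ⟨fun y => -newtMass⁻¹ * conv (newt 0) g' y,
    contDiff_const.mul (conv_contDiff newt_locallyIntegrable hg' hc), ?_⟩
  filter_upwards [heq] with y hy
  rw [lap3_const_mul, lap3_conv_newt hg' hc, ← hy]
  field_simp [newtMass_pos.ne']

/-- The inductive step of the Mittag-Leffler argument: a solution of `Δv = g` near a compact set `K`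
star-shaped about the origin can be replaced, at the price of a small change on `K`, by a solution
near any larger compact set. -/
lemma extend_solution {U K L : Set E3} (hU : IsOpen U) (hK : IsCompact K) (hK0 : 0 ∈ K)
    (hKs : ∀ s ∈ Icc (0 : ℝ) 1, ∀ x ∈ K, s • x ∈ K) (hL : IsCompact L) (hLU : L ⊆ U)
    {g : E3 → ℝ} (hg : ContDiffOn ℝ ∞ g U) {v : E3 → ℝ} (hv : ContDiff ℝ ∞ v)
    (hvK : ∀ᶠ y in 𝓝ˢ K, lap3 v y = g y) {ε : ℝ} (hε : 0 < ε) :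
    ∃ w : E3 → ℝ, ContDiff ℝ ∞ w ∧ (∀ᶠ y in 𝓝ˢ L, lap3 w y = g y) ∧
      ∀ x ∈ K, |w x - v x| ≤ ε := by
  obtain ⟨g', hg', hc, heq, hzero⟩ := exists_truncation hU hL hLU
    (hg.sub (lap3_contDiff hv).contDiffOn)
  have hKg (x : E3) (hx : x ∈ K) : x ∉ tsupport g' := by
    rw [notMem_tsupport_iff_eventuallyEq]
    filter_upwards [(eventually_nhdsSet_iff_forall.1 hvK) x hx] with y hy
    exact hzero y (by rw [hy, sub_self])
  obtain ⟨R, hR, hLR⟩ := hL.isBounded.exists_pos_norm_lt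
  obtain ⟨w, hw, hwl, hwK⟩ := exists_small_solution hK hK0 hg' hc
    (fun s hs x hx => hKg _ (hKs s hs x hx)) hR hε
  refine ⟨fun y => v y + w y, hv.add hw, ?_, fun x hx => by simpa using hwK x hx⟩
  have hball : L ⊆ Metric.ball 0 R := fun y hy => by simpa using hLR y hy
  filter_upwards [heq, Metric.isOpen_ball.mem_nhdsSet.2 hball] with y hy hyR
  rw [lap3_add_of_contDiffAt hv.contDiffAt hw.contDiffAt, hwl y hyR, hy]
  ring

/-- An open set star-shaped about the origin is exhausted by compact sets star-shaped about the
origin, namely the star hulls of the sets of a compact exhaustion. -/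
lemma exists_star_exhaustion {U : Set E3} (hU : IsOpen U) (h0 : (0 : E3) ∈ U)
    (hstar : StarConvex ℝ 0 U) : ∃ K : ℕ → Set E3, (∀ n, IsCompact (K n)) ∧ (∀ n, 0 ∈ K n) ∧
      (∀ n, ∀ s ∈ Icc (0 : ℝ) 1, ∀ x ∈ K n, s • x ∈ K n) ∧ (∀ n, K n ⊆ U) ∧ Monotone K ∧
      ∀ x ∈ U, ∃ n, x ∈ interior (K n) := by
  have : LocallyCompactSpace U := hU.locallyCompactSpace
  let C : CompactExhaustion U := CompactExhaustion.choice U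
  let B : ℕ → Set E3 := fun n => insert 0 (Subtype.val '' C n)
  let K : ℕ → Set E3 := fun n => (fun p : ℝ × E3 => p.1 • p.2) '' (Icc (0 : ℝ) 1 ×ˢ B n)
  have hBK (n : ℕ) : B n ⊆ K n := fun x hx => ⟨(1, x), ⟨by simp, hx⟩, by simp⟩
  refine ⟨K, fun n => ?_, fun n => hBK n (mem_insert _ _), ?_, ?_, ?_, ?_⟩
  · exact (isCompact_Icc.prod (((C.isCompact n).image continuous_subtype_val).insert 0)).image
      (by fun_prop)
  · rintro n s hs _ ⟨⟨t, x⟩, ⟨ht, hx⟩, rfl⟩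
    refine ⟨(s * t, x), ⟨⟨mul_nonneg hs.1 ht.1, mul_le_one₀ hs.2 ht.1 ht.2⟩, hx⟩, ?_⟩
    exact mul_smul s t x
  · rintro n _ ⟨⟨t, x⟩, ⟨ht, hx⟩, rfl⟩
    have hxU : x ∈ U := by
      rcases hx with rfl | ⟨y, -, rfl⟩
      · exact h0
      · exact y.2
    exact hstar.smul_mem hxU ht.1 ht.2
  · intro m n hmn
    exact image_mono (prod_mono subset_rfl (insert_subset_insert (image_mono (C.subset hmn))))
  · intro x hx
    obtain ⟨n, hn⟩ := C.exists_mem_nhds ⟨x, hx⟩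
    refine ⟨n, mem_interior_iff_mem_nhds.2 (mem_of_superset ?_
      ((subset_insert _ _).trans (hBK n)))⟩
    exact hU.isOpenEmbedding_subtypeVal.isOpenMap.image_mem_nhds hn

/-- The Laplacian is surjective on smooth functions on an open set star-shaped about the origin. -/
lemma lap3_surjective_zero {U : Set E3} (hU : IsOpen U) (h0 : (0 : E3) ∈ U)
    (hstar : StarConvex ℝ 0 U) {g : E3 → ℝ} (hg : ContDiffOn ℝ ∞ g U) :
    ∃ φ : E3 → ℝ, ContDiffOn ℝ ∞ φ U ∧ ∀ x ∈ U, lap3 φ x = g x := by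
  obtain ⟨K, hKc, hK0, hKs, hKU, hKm, hKint⟩ := exists_star_exhaustion hU h0 hstar
  let P : ℕ → Type := fun n =>
    {v : E3 → ℝ // ContDiff ℝ ∞ v ∧ ∀ᶠ y in 𝓝ˢ (K n), lap3 v y = g y}
  have base : Nonempty (P 0) :=
    let ⟨v, hv⟩ := exists_solution_near hU (hKc 0) (hKU 0) hg
    ⟨⟨v, hv⟩⟩
  have step (n : ℕ) (v : P n) : ∃ w : P (n + 1), ∀ x ∈ K n, |w.1 x - v.1 x| ≤ (1 / 2 : ℝ) ^ n :=
    let ⟨w, hw, hwl, hwK⟩ := extend_solution hU (hKc n) (hK0 n) (hKs n) (hKc (n + 1))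
      (hKU (n + 1)) hg v.2.1 v.2.2 (show (0 : ℝ) < (1 / 2) ^ n by positivity)
    ⟨⟨w, hw, hwl⟩, hwK⟩
  choose next hnext using step
  let V : (n : ℕ) → P n := fun n => Nat.rec base.some (fun n v => next n v) n
  let v : ℕ → E3 → ℝ := fun n => (V n).1
  have hvs (n : ℕ) : ContDiff ℝ ∞ (v n) := (V n).2.1
  have hvl (n : ℕ) (x : E3) (hx : x ∈ K n) : lap3 (v n) x = g x :=
    (V n).2.2.self_of_nhdsSet x hx
  have hvd (n : ℕ) (x : E3) (hx : x ∈ K n) : |v (n + 1) x - v n x| ≤ (1 / 2 : ℝ) ^ n :=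
    hnext n (V n) x hx
  let φ : E3 → ℝ := fun x => limUnder atTop fun n => v n x
  have key (x : E3) (hx : x ∈ U) : ContDiffAt ℝ ∞ φ x ∧ lap3 φ x = g x := by
    obtain ⟨m, hm⟩ := hKint x hx
    -- on `K m` the sequence differs from `v m` by a uniformly convergent series
    let G : E3 → ℝ := fun x => ∑' n, (v (n + 1 + m) x - v (n + m) x)
    have hsum : Summable fun n : ℕ => (1 / 2 : ℝ) ^ (n + m) :=
      (summable_nat_add_iff m).2 summable_geometric_two
    have hG : TendstoUniformlyOn (fun N x => v (N + m) x - v m x) G atTop (K m) := by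
      have := tendstoUniformlyOn_tsum_nat hsum (s := K m)
        (f := fun n x => v (n + 1 + m) x - v (n + m) x) fun n x hx => by
          have := hvd (n + m) x (hKm (Nat.le_add_left m n) hx)
          rw [Real.norm_eq_abs, Nat.add_right_comm n 1 m]
          exact this
      refine this.congr (Eventually.of_forall fun N x _ => ?_)
      have := Finset.sum_range_sub (fun n => v (n + m) x) N
      simpa using this
    have hφ (y : E3) (hy : y ∈ K m) : φ y = v m y + G y := by
      refine Tendsto.limUnder_eq ((tendsto_add_atTop_iff_nat m).1 ?_)
      refine ((hG.tendsto_at hy).const_add (v m y)).congr fun N => ?_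
      ring
    obtain ⟨hGs, hGl⟩ := harmonic_limit (mem_interior_iff_mem_nhds.1 hm)
      (fun N => (hvs (N + m)).sub (hvs m)) (fun N y hy => by
        rw [lap3_sub (hvs _).contDiffAt (hvs _).contDiffAt, hvl m y hy,
          hvl (N + m) y (hKm (Nat.le_add_left m N) hy), sub_self]) hG
    have heq : φ =ᶠ[𝓝 x] fun y => v m y + G y := by
      filter_upwards [mem_interior_iff_mem_nhds.1 hm] with y hy using hφ y hy
    refine ⟨((hvs m).contDiffAt.add hGs).congr_of_eventuallyEq heq, ?_⟩
    rw [(lap3_congr heq).eq_of_nhds, lap3_add_of_contDiffAt (hvs m).contDiffAt hGs, hGl,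
      hvl m x (interior_subset hm), add_zero]
  exact ⟨φ, fun x hx => (key x hx).1.contDiffWithinAt, fun x hx => (key x hx).2⟩

/-- The Laplacian is surjective on smooth functions on an open star-shaped set. -/
lemma lap3_surjective {U : Set E3} (hU : IsOpen U) {c : E3} (hc : c ∈ U)
    (hstar : StarConvex ℝ c U) {g : E3 → ℝ} (hg : ContDiffOn ℝ ∞ g U) :
    ∃ φ : E3 → ℝ, ContDiffOn ℝ ∞ φ U ∧ ∀ x ∈ U, lap3 φ x = g x := by
  have hs : StarConvex ℝ 0 ((fun x => x + c) ⁻¹' U) := by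
    intro y hy a b ha hb hab
    have := hstar hy ha hb hab
    simp only [mem_preimage, smul_zero, zero_add]
    rwa [smul_add, add_left_comm, ← add_smul, hab, one_smul] at this
  obtain ⟨φ, hφ, hl⟩ := lap3_surjective_zero (U := (fun x => x + c) ⁻¹' U)
    (hU.preimage (by fun_prop)) (by simpa using hc) hs (g := fun x => g (x + c))
    (hg.comp (by fun_prop : ContDiff ℝ ∞ fun x : E3 => x + c).contDiffOn fun x hx => hx)
  refine ⟨fun x => φ (x + -c), ?_, fun x hx => ?_⟩
  · exact hφ.comp (by fun_prop : ContDiff ℝ ∞ fun x : E3 => x + -c).contDiffOn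
      fun x hx => by simpa using hx
  · rw [lap3_comp_add, hl _ (by simpa using hx)]
    simp

/-! ### The decomposition -/

lemma pd3_comm {f : E3 → ℝ} {x : E3} (hf : ContDiffAt ℝ ∞ f x) (i j : Fin 3) :
    pd3 (pd3 f i) j x = pd3 (pd3 f j) i x := by
  have hd : DifferentiableAt ℝ (fderiv ℝ f) x :=
    (hf.fderiv_right (m := ∞) (by simp)).differentiableAt (by simp)
  have h (i j : Fin 3) : pd3 (pd3 f i) j x
      = fderiv ℝ (fderiv ℝ f) x (EuclideanSpace.single j 1) (EuclideanSpace.single i 1) := by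
    have e : pd3 f i = fun y => fderiv ℝ f y (EuclideanSpace.single i 1) := rfl
    rw [pd3, pd, e, fderiv_clm_apply hd (differentiableAt_const _)]
    simp
  rw [h, h]
  exact hf.isSymmSndFDerivAt (by
    rw [minSmoothness_of_isRCLikeNormedField]
    exact ENat.LEInfty.out) _ _

/-- **Local Helmholtz decomposition.** On an open star-shaped subset `U` of `ℝ³`, every
smooth vector field decomposes as `F = ∇φ + curl a` for a smooth scalar `φ` and a smooth
vector field `a`. -/
theorem local_helmholtz_decomposition
    (U : Set (EuclideanSpace ℝ (Fin 3))) (hU : IsOpen U)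
    (c : EuclideanSpace ℝ (Fin 3)) (hc : c ∈ U) (hstar : StarConvex ℝ c U)
    (F : EuclideanSpace ℝ (Fin 3) → EuclideanSpace ℝ (Fin 3))
    (hF : ContDiffOn ℝ (⊤ : ℕ∞) F U) :
    ∃ φ : EuclideanSpace ℝ (Fin 3) → ℝ,
      ∃ a : EuclideanSpace ℝ (Fin 3) → EuclideanSpace ℝ (Fin 3),
        ContDiffOn ℝ (⊤ : ℕ∞) φ U ∧ ContDiffOn ℝ (⊤ : ℕ∞) a U ∧
        ∀ x ∈ U, ∀ i : Fin 3, F x i = grad3 φ x i + curl3 a x i := by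
  choose b hb hbl using fun i => lap3_surjective hU hc hstar (contDiffOn_euclidean.1 hF i)
  have hp (k i : Fin 3) : ContDiffOn ℝ ∞ (pd3 (b k) i) U := pd3_contDiffOn hU (hb k) i
  -- `φ = div b` and `a = -curl b`, so that `∇φ + curl a = Δb`
  refine ⟨fun x => pd3 (b 0) 0 x + pd3 (b 1) 1 x + pd3 (b 2) 2 x,
    fun x => !₂[pd3 (b 1) 2 x - pd3 (b 2) 1 x, pd3 (b 2) 0 x - pd3 (b 0) 2 x,
      pd3 (b 0) 1 x - pd3 (b 1) 0 x],
    ((hp 0 0).add (hp 1 1)).add (hp 2 2), contDiffOn_euclidean.2 fun i => ?_, fun x hx i => ?_⟩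
  · fin_cases i
    · exact (hp 1 2).sub (hp 2 1)
    · exact (hp 2 0).sub (hp 0 2)
    · exact (hp 0 1).sub (hp 1 0)
  · have hd (k i : Fin 3) : DifferentiableAt ℝ (pd3 (b k) i) x :=
      ((hp k i).contDiffAt (hU.mem_nhds hx)).differentiableAt (by simp)
    have hs (k i j : Fin 3) := pd3_comm ((hb k).contDiffAt (hU.mem_nhds hx)) i j
    have hg (j : Fin 3) : pd3 (fun x => pd3 (b 0) 0 x + pd3 (b 1) 1 x + pd3 (b 2) 2 x) j x
        = pd3 (pd3 (b 0) 0) j x + pd3 (pd3 (b 1) 1) j x + pd3 (pd3 (b 2) 2) j x := by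
      rw [pd3_add (f := fun x => pd3 (b 0) 0 x + pd3 (b 1) 1 x) ((hd 0 0).add (hd 1 1)) (hd 2 2), pd3_add (hd 0 0) (hd 1 1)]
    have hc (k i l m j : Fin 3) : pd3 (fun x => pd3 (b k) i x - pd3 (b l) m x) j x
        = pd3 (pd3 (b k) i) j x - pd3 (pd3 (b l) m) j x := pd3_sub (hd k i) (hd l m) j
    have hl := hbl i x hx
    rw [lap3, Fin.sum_univ_three] at hl
    rw [← hl]
    fin_cases i
    · simp [grad3, curl3, hg, hc]
      linarith [hs 1 0 1, hs 2 0 2]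
    · simp [grad3, curl3, hg, hc]
      linarith [hs 0 0 1, hs 2 1 2]
    · simp [grad3, curl3, hg, hc]
      linarith [hs 0 0 2, hs 1 1 2]
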